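/- arXiv:2502.03274 — 3 statements merged into one kernel-verified Lean document; each statement's English description precedes it below -/
import Mathlib

section
/- (Forward direction of the reduction from E-MAJSAT to E-WMC.) Let φ : (Fin n → Bool) → (Fin m → Bool) → Bool be a Boolean formula. If there exists an assignment x* : Fin n → Bool such that the number of assignments y : Fin m → Bool with φ x* y = true is at least 2^m / 2 (i.e., 2 · #φ|_{x*} ≥ 2^m), then there exists a weight vector w : Fin n → ℝ with 0 ≤ w i ≤ 1 for all i such that the weighted model count with y-weights 1/2 satisfies WMC(φ, w) ≥ 1/2; in fact, the weight vector w* with w* i = 1 if x* i = true and w* i = 0 otherwise achieves WMC(φ, w*) ≥ 1/2. -/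
/-! The 0/1 weight vector of `xstar` concentrates the product weight on `x = xstar`, where it
equals 1 (`prod_indicator_weight`). Hence the weighted model count is `#φ|_{xstar} / 2 ^ m`
(`WMC_indicator`), which is at least `1 / 2` by hypothesis. -/

open Finset

/-- The weighted model count of a Boolean formula `φ` over `x`-variables (with weights `w`)
and `y`-variables (each with weight `1/2`). -/
noncomputable def WMC {n m : ℕ} (φ : (Fin n → Bool) → (Fin m → Bool) → Bool)
    (w : Fin n → ℝ) : ℝ :=
  ∑ p ∈ Finset.univ.filter
      (fun p : (Fin n → Bool) × (Fin m → Bool) => φ p.1 p.2 = true),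
    (∏ i, if p.1 i then w i else 1 - w i) * (1 / 2 : ℝ) ^ m

lemma prod_indicator_weight {n : ℕ} (x xstar : Fin n → Bool) :
    (∏ i, if x i then (if xstar i then (1 : ℝ) else 0) else 1 - (if xstar i then (1 : ℝ) else 0))
      = if x = xstar then 1 else 0 := by
  split_ifs with hx
  · subst hx
    refine Finset.prod_eq_one fun i _ => ?_
    cases x i <;> simp
  · obtain ⟨i, hi⟩ := Function.ne_iff.mp hx
    refine Finset.prod_eq_zero (Finset.mem_univ i) ?_
    cases h1 : x i <;> cases h2 : xstar i <;> simp_all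

lemma WMC_indicator {n m : ℕ} (φ : (Fin n → Bool) → (Fin m → Bool) → Bool)
    (xstar : Fin n → Bool) :
    WMC φ (fun i => if xstar i then (1 : ℝ) else 0)
      = (Finset.univ.filter (fun y : Fin m → Bool => φ xstar y = true)).card
          * (1 / 2 : ℝ) ^ m := by
  unfold WMC
  simp only [prod_indicator_weight]
  rw [← Finset.sum_mul, Finset.sum_filter, Fintype.sum_prod_type,
    Finset.sum_eq_single xstar]
  · simp
  · intro x _ hx
    simp [hx]
  · simp

theorem emajsat_to_ewmc_forward {n m : ℕ}
    (φ : (Fin n → Bool) → (Fin m → Bool) → Bool) (xstar : Fin n → Bool)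
    (h : 2 * (Finset.univ.filter (fun y : Fin m → Bool => φ xstar y = true)).card ≥ 2 ^ m) :
    (∃ w : Fin n → ℝ, (∀ i, 0 ≤ w i ∧ w i ≤ 1) ∧ WMC φ w ≥ 1 / 2) ∧
      WMC φ (fun i => if xstar i then (1 : ℝ) else 0) ≥ 1 / 2 := by
  have key : WMC φ (fun i => if xstar i then (1 : ℝ) else 0) ≥ 1 / 2 := by
    rw [WMC_indicator, one_div_pow, mul_one_div, ge_iff_le, div_le_div_iff₀ two_pos (by positivity)]
    have h' : (2 : ℝ) ^ m ≤
        2 * (Finset.univ.filter (fun y : Fin m → Bool => φ xstar y = true)).card := by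
      exact_mod_cast h
    linarith
  refine ⟨⟨_, fun i => ?_, key⟩, key⟩
  split_ifs <;> norm_num
end

section
/- (Backward direction of the reduction, contrapositive form.) Let φ : (Fin n → Bool) → (Fin m → Bool) → Bool be a Boolean formula with m ≥ 1. Suppose that for every assignment x : Fin n → Bool, the number of assignments y : Fin m → Bool with φ x y = true is strictly less than 2^m / 2 (i.e., 2 · #φ|ₓ < 2^m for all x). Then for every weight vector w : Fin n → ℝ with 0 ≤ w i ≤ 1 for all i, the weighted model count with y-weights 1/2 satisfies WMC(φ, w) < 1/2. -/
/-!
The products `P x = ∏ i, (if x i then w i else 1 - w i)` are nonnegative and sum to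
`∏ i, (w i + (1 - w i)) = 1`. Grouping the models of `φ` by their `x`-part exhibits `WMC φ w` as
the `P`-average of the fractions `#φ|ₓ / 2 ^ m`, each of which is below `1 / 2`. The average is
strictly below `1 / 2` because some `P x` is positive.
-/

open Finset

lemma sum_prod_weights_eq_one {n : ℕ} (w : Fin n → ℝ) :
    ∑ x : Fin n → Bool, ∏ i, (if x i then w i else 1 - w i) = 1 := by
  have key := Fintype.prod_sum (fun (i : Fin n) (b : Bool) => if b then w i else 1 - w i)
  rw [← key]
  simp

lemma WMC_eq_sum_card {n m : ℕ} (φ : (Fin n → Bool) → (Fin m → Bool) → Bool)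
    (w : Fin n → ℝ) :
    WMC φ w = ∑ x : Fin n → Bool, (∏ i, if x i then w i else 1 - w i) *
      ((Finset.univ.filter (fun y : Fin m → Bool => φ x y = true)).card * (1 / 2 : ℝ) ^ m) := by
  unfold WMC
  rw [Finset.sum_filter, Fintype.sum_prod_type]
  refine Finset.sum_congr rfl fun x _ => ?_
  rw [← Finset.sum_filter]
  -- `change` also reduces `(x, y).1` inside the decidability instances, making the summand constant
  change ∑ y : Fin m → Bool with φ x y = true,
    (∏ i, if x i then w i else 1 - w i) * (1 / 2 : ℝ) ^ m = _
  rw [Finset.sum_const, nsmul_eq_mul]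
  ring

theorem emajsat_to_ewmc_backward {n m : ℕ} (hm : 1 ≤ m)
    (φ : (Fin n → Bool) → (Fin m → Bool) → Bool)
    (h : ∀ x : Fin n → Bool,
      2 * (Finset.univ.filter (fun y : Fin m → Bool => φ x y = true)).card < 2 ^ m) :
    ∀ w : Fin n → ℝ, (∀ i, 0 ≤ w i ∧ w i ≤ 1) → WMC φ w < 1 / 2 := by
  intro w hw
  have hP : ∀ x : Fin n → Bool, 0 ≤ ∏ i, (if x i then w i else 1 - w i) := fun x =>
    Finset.prod_nonneg fun i _ => by
      have := hw i
      split_ifs <;> linarith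
  have hfrac : ∀ x : Fin n → Bool,
      ((Finset.univ.filter (fun y : Fin m → Bool => φ x y = true)).card : ℝ) * (1 / 2 : ℝ) ^ m
        < 1 / 2 := fun x => by
    have hx : (2 : ℝ) * (Finset.univ.filter (fun y : Fin m → Bool => φ x y = true)).card
        < 2 ^ m := by exact_mod_cast h x
    rw [one_div_pow, mul_one_div, div_lt_iff₀ (by positivity)]
    linarith
  have hsum := sum_prod_weights_eq_one w
  obtain ⟨x₀, -, hx₀⟩ : ∃ x ∈ (Finset.univ : Finset (Fin n → Bool)),
      0 < ∏ i, (if x i then w i else 1 - w i) :=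
    Finset.exists_lt_of_sum_lt (by rw [hsum]; simp)
  calc WMC φ w = _ := WMC_eq_sum_card φ w
    _ < ∑ x : Fin n → Bool, (∏ i, if x i then w i else 1 - w i) * (1 / 2) :=
      Finset.sum_lt_sum (fun x _ => mul_le_mul_of_nonneg_left (hfrac x).le (hP x))
        ⟨x₀, Finset.mem_univ _, mul_lt_mul_of_pos_left (hfrac x₀) hx₀⟩
    _ = 1 / 2 := by rw [← Finset.sum_mul, hsum, one_mul]
end

section
/- (Correctness of the reduction from E-MAJSAT to E-WMC, Proposition B.1 of the paper, stated as the underlying equivalence.) Let φ : (Fin n → Bool) → (Fin m → Bool) → Bool be a Boolean formula with m ≥ 1. Then the following are equivalent: (1) there exists an assignment x : Fin n → Bool such that 2 · #φ|ₓ ≥ 2^m (the E-MAJSAT condition that the majority of assignments to y satisfy φ|ₓ); and (2) there exists a weight vector w : Fin n → ℝ with 0 ≤ w i ≤ 1 for all i such that the weighted model count with y-weights 1/2 satisfies WMC(φ, w) ≥ 1/2 (the E-WMC condition with threshold T* = 1/2, intervals [0,1] for x-variables and [1/2, 1/2] for y-variables). -/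
/-!
Grouping the models of `φ` by their `x`-part gives
`WMC φ w = ∑ x, P_w(x) · (#φ|ₓ / 2 ^ m)`, where `P_w(x) = ∏ i, (if x i then w i else 1 - w i)`
(`WMC_eq_sum`). For `w ∈ [0,1]ⁿ` the `P_w(x)` are nonnegative and sum to `1`
(`sum_assignmentWeight`), so `WMC φ w` is a convex combination of the fractions `#φ|ₓ / 2 ^ m`:
if all of them are below `1/2`, so is the weighted model count. Conversely, for the `0/1`-vector
`w` of an assignment `x`, `P_w` is the point mass at `x` (`assignmentWeight_indicator`), and
`WMC φ w` is exactly `#φ|ₓ / 2 ^ m`.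
-/

open Finset

/-- The weight of the assignment `x`: its probability when the variables are independent and
variable `i` is true with probability `w i`. -/
noncomputable def assignmentWeight {n : ℕ} (w : Fin n → ℝ) (x : Fin n → Bool) : ℝ :=
  ∏ i, if x i then w i else 1 - w i

theorem sum_assignmentWeight {n : ℕ} (w : Fin n → ℝ) : ∑ x, assignmentWeight w x = 1 := by
  have h := Finset.prod_univ_sum (fun _ : Fin n => (Finset.univ : Finset Bool))
    (fun i b => if b then w i else 1 - w i)
  simp only [Fintype.piFinset_univ] at h
  unfold assignmentWeight
  rw [← h]
  simp

theorem assignmentWeight_nonneg {n : ℕ} {w : Fin n → ℝ} (hw : ∀ i, 0 ≤ w i ∧ w i ≤ 1)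
    (x : Fin n → Bool) : 0 ≤ assignmentWeight w x := by
  refine Finset.prod_nonneg fun i _ => ?_
  split_ifs
  · exact (hw i).1
  · linarith [(hw i).2]

theorem assignmentWeight_indicator {n : ℕ} (x z : Fin n → Bool) :
    assignmentWeight (fun i => if x i then 1 else 0) z = if z = x then 1 else 0 := by
  unfold assignmentWeight
  split_ifs with h
  · subst h
    exact Finset.prod_eq_one fun i _ => by cases h : z i <;> simp [h]
  · obtain ⟨i, hi⟩ := Function.ne_iff.mp h
    refine Finset.prod_eq_zero (Finset.mem_univ i) ?_
    cases hz : z i <;> cases hx : x i <;> simp_all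

theorem WMC_eq_sum {n m : ℕ} (φ : (Fin n → Bool) → (Fin m → Bool) → Bool) (w : Fin n → ℝ) :
    WMC φ w = ∑ x, assignmentWeight w x *
      ((Finset.univ.filter (fun y : Fin m → Bool => φ x y = true)).card * (1 / 2 : ℝ) ^ m) := by
  unfold WMC assignmentWeight
  rw [Finset.sum_filter, Fintype.sum_prod_type]
  refine Finset.sum_congr rfl fun x _ => ?_
  rw [← Finset.sum_filter, Finset.sum_eq_card_nsmul
    (b := (∏ i, if x i then w i else 1 - w i) * (1 / 2 : ℝ) ^ m) (fun _ _ => rfl), nsmul_eq_mul]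
  ring

/-- The integer majority condition, restated for the fraction of satisfying assignments. -/
theorem two_pow_le_two_mul_iff (m c : ℕ) :
    2 ^ m ≤ 2 * c ↔ (1 / 2 : ℝ) ≤ c * (1 / 2 : ℝ) ^ m := by
  have h2 : (0 : ℝ) < 2 ^ m := by positivity
  rw [one_div_pow, mul_one_div, le_div_iff₀ h2, ← Nat.cast_le (α := ℝ)]
  push_cast
  constructor <;> intro h <;> linarith

theorem emajsat_iff_ewmc {n m : ℕ} (hm : 1 ≤ m)
    (φ : (Fin n → Bool) → (Fin m → Bool) → Bool) :
    (∃ x : Fin n → Bool,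
        2 * (Finset.univ.filter (fun y : Fin m → Bool => φ x y = true)).card ≥ 2 ^ m) ↔
      (∃ w : Fin n → ℝ, (∀ i, 0 ≤ w i ∧ w i ≤ 1) ∧ WMC φ w ≥ 1 / 2) := by
  simp only [ge_iff_le, two_pow_le_two_mul_iff]
  constructor
  · rintro ⟨x, hx⟩
    refine ⟨fun i => if x i then 1 else 0, fun i => by dsimp only; split_ifs <;> norm_num, ?_⟩
    simpa only [WMC_eq_sum, assignmentWeight_indicator, ite_mul, one_mul, zero_mul,
      Finset.sum_ite_eq', Finset.mem_univ, if_true] using hx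
  · rintro ⟨w, hw, h⟩
    by_contra! hlt
    -- Some assignment has positive weight, which makes the averaged inequality strict.
    obtain ⟨x, -, hx⟩ : ∃ x ∈ Finset.univ, 0 < assignmentWeight w x :=
      Finset.exists_lt_of_sum_lt (by simp [sum_assignmentWeight])
    have hsum : WMC φ w < ∑ x, assignmentWeight w x * (1 / 2) := by
      rw [WMC_eq_sum]
      exact Finset.sum_lt_sum
        (fun z _ => mul_le_mul_of_nonneg_left (hlt z).le (assignmentWeight_nonneg hw z))
        ⟨x, Finset.mem_univ x, mul_lt_mul_of_pos_left (hlt x) hx⟩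
    rw [← Finset.sum_mul, sum_assignmentWeight] at hsum
    linarith
end
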